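/- (Vertex-nullity interlace polynomial as a circuit-partition generating function) Let w be a double occurrence word on n ≥ 1 vertices and let ℓ : {1,…,n} → GF(2) be a loop assignment; let A = I(w) + diag(ℓ). For each subset S ⊆ {1,…,n} define the transition assignment t_S by t_S(v) = follow if v ∉ S, t_S(v) = reverse if v ∈ S and ℓ(v) = 1, and t_S(v) = cross if v ∈ S and ℓ(v) = 0. Then the identity Σ_{S⊆{1,…,n}} (y−1)^{ν(A_S)} = Σ_{S⊆{1,…,n}} (y−1)^{|P_{t_S}|−1} holds in ℤ[y], where A_S is the principal submatrix of A on the rows and columns indexed by S. (The left-hand side is the vertex-nullity interlace polynomial q_N(H) of the looped graph H with adjacency matrix A.) -/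

import Mathlib

/-!
The identity holds term by term: for each `S`, the circuit partition `P` of `t_S` satisfies
`|P| - 1 = ν(A_S)`. Both sides are computed by counting vectors over `GF(2)`.

Count the edge labellings `f : ℤ/2n → GF(2)` that are constant on the circuits. There are `2 ^ |P|`
of them, and `τ` has `2 |P|` orbits, since a dart is never in the same orbit as its reversal
(`exists_circuit_count`, via `orbitCount_eq_two_mul` and `not_sameCycle_reverse`).

For such an `f` and a vertex `v` at positions `a` and `b`, each of the three kinds of transition
forces `f a - f (a - 1) = f b - f (b - 1)`; call this common value the jump `x v`. Conversely, jumps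
`x` and one value determine `f`, and any `x` occurs because each letter appears twice, so the jumps
sum to `0` around the cycle. Walking from the first to the second occurrence of `v` collects
`(I(w) x) v` from the letters strictly in between (`sum_between_eq_mulVec`), so constancy on
circuits at `v` says: `x v = 0` for follow, `(I(w) x) v = 0` for cross, `(I(w) x) v + x v = 0` for
reverse (`constOnCircuits_iff`). This system says that `x` is supported on `S` and that its
restriction to `S` lies in the kernel of `A_S` (`card_jumpSolutions`), which has `2 ^ ν(A_S)`
elements. Hence `2 ^ |P| = 2 * 2 ^ ν(A_S)`.
-/

open scoped Classical

/-- The GF(2)-nullity of a square matrix: number of columns minus rank. -/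
noncomputable def nullity {ι : Type*} [Fintype ι] (M : Matrix ι ι (ZMod 2)) : ℕ :=
  Fintype.card ι - M.rank

/-- The setoid on `α` whose classes are the orbits (cycles, including fixed points)
of a permutation. -/
def sameCycleSetoid {α : Type*} (π : Equiv.Perm α) : Setoid α :=
  ⟨π.SameCycle, ⟨fun x => Equiv.Perm.SameCycle.refl π x, fun h => h.symm, fun h h' => h.trans h'⟩⟩

/-- The number of orbits of a permutation (fixed points count as orbits). -/
noncomputable def orbitCount {α : Type*} (π : Equiv.Perm α) : ℕ :=
  Nat.card (Quotient (sameCycleSetoid π))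

/-- A double occurrence word on `n` vertices: a map from the `2n` cyclic positions to the
vertices in which every vertex occurs at exactly two positions. -/
def DoubleOccurrence {n : ℕ} (w : Fin (2 * n) → Fin n) : Prop :=
  ∀ v : Fin n, (Finset.univ.filter fun p => w p = v).card = 2

/-- Distinct vertices `u` and `v` are interlaced in `w` when the two occurrences of `v` lie
in different cyclic arcs determined by the two occurrences of `u`; cutting the cycle at
position `0`, this says that exactly one occurrence of `v` lies strictly between the two
occurrences of `u`. -/
def Interlaced {n : ℕ} (w : Fin (2 * n) → Fin n) (u v : Fin n) : Prop :=
  u ≠ v ∧ ∀ p q : Fin (2 * n), p < q → w p = u → w q = u →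
    (Finset.univ.filter fun r => p < r ∧ r < q ∧ w r = v).card = 1

/-- The interlace matrix of a double occurrence word: the `(u,v)` entry is `1` iff `u ≠ v`
and `u`, `v` are interlaced; the diagonal entries are `0`. -/
noncomputable def interlaceMatrix {n : ℕ} (w : Fin (2 * n) → Fin n) :
    Matrix (Fin n) (Fin n) (ZMod 2) :=
  Matrix.of fun u v => if Interlaced w u v then 1 else 0

/-- A transition at a vertex: follow the word, cross it consistently with its orientation,
or reverse orientation. -/
inductive Transition : Type
  | follow : Transition
  | cross : Transition
  | reverse : Transition
deriving DecidableEq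

/-- The matrix `I_t(w)`: delete the rows/columns of the vertices where `t` is `follow`,
and put diagonal entry `1` at the vertices where `t` is `reverse` (and `0` where `t` is
`cross`); off-diagonal entries record interlacement in `w`. -/
noncomputable def transMatrix {n : ℕ} (w : Fin (2 * n) → Fin n) (t : Fin n → Transition) :
    Matrix {v : Fin n // t v ≠ Transition.follow} {v : Fin n // t v ≠ Transition.follow}
      (ZMod 2) :=
  Matrix.of fun u v =>
    if u = v then (if t u.1 = Transition.reverse then 1 else 0)
    else if Interlaced w u.1 v.1 then 1 else 0

/-- The position `1` in `Fin (2n)`, for `n ≥ 1`. -/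
def pos1 {n : ℕ} (hn : 0 < n) : Fin (2 * n) := ⟨1, by omega⟩

/-- `τ` is the dart permutation determined by the transition assignment `t` on the double
occurrence word `w`: darts are pairs `(p, ε)` with `ε = true` the traversal of the edge
`e_p` from `w(p)` to `w(p+1)` and `ε = false` its reverse, and for each vertex `v`
occurring at positions `a` and `b` the images of the four darts arriving at `v` are as
prescribed by `t v`. -/
def IsDartPerm {n : ℕ} (hn : 0 < n) (w : Fin (2 * n) → Fin n) (t : Fin n → Transition)
    (τ : Equiv.Perm (Fin (2 * n) × Bool)) : Prop :=
  ∀ (v : Fin n) (a b : Fin (2 * n)), a ≠ b → w a = v → w b = v →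
    (t v = Transition.follow →
      τ (a - pos1 hn, true) = (a, true) ∧ τ (b - pos1 hn, true) = (b, true) ∧
      τ (a, false) = (a - pos1 hn, false) ∧ τ (b, false) = (b - pos1 hn, false)) ∧
    (t v = Transition.cross →
      τ (a - pos1 hn, true) = (b, true) ∧ τ (b - pos1 hn, true) = (a, true) ∧
      τ (a, false) = (b - pos1 hn, false) ∧ τ (b, false) = (a - pos1 hn, false)) ∧
    (t v = Transition.reverse →
      τ (a - pos1 hn, true) = (b - pos1 hn, false) ∧ τ (b - pos1 hn, true) = (a - pos1 hn, false) ∧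
      τ (a, false) = (b, true) ∧ τ (b, false) = (a, true))

/-! ### Counting orbits up to reversal -/

/-- The relation on darts whose classes are the circuits: same orbit of `τ`, up to reversal of
one of the darts by the involution `ρ`. -/
def circuitSetoid {α : Type*} (τ : Equiv.Perm α) (ρ : α → α)
    (hρ : ∀ d, ρ (ρ d) = d) (hconj : ∀ d e, τ.SameCycle d e → τ.SameCycle (ρ d) (ρ e)) :
    Setoid α where
  r d e := τ.SameCycle d e ∨ τ.SameCycle d (ρ e)
  iseqv :=
    { refl := fun d => Or.inl (Equiv.Perm.SameCycle.refl τ d)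
      symm := by
        rintro d e (h | h)
        · exact Or.inl h.symm
        · right
          have := hconj _ _ h
          rw [hρ] at this
          exact this.symm
      trans := by
        rintro d e g (h | h) (h' | h')
        · exact Or.inl (h.trans h')
        · exact Or.inr (h.trans h')
        · exact Or.inr (h.trans (hconj _ _ h'))
        · left
          have := hconj _ _ h'
          rw [hρ] at this
          exact h.trans this }

/-- `ρ` carries orbits of `τ` to orbits when it conjugates `τ` to its inverse. -/
lemma sameCycle_reverse {α : Type*} (τ : Equiv.Perm α) (ρ : Equiv.Perm α)
    (hconj : ρ * τ * ρ⁻¹ = τ⁻¹) (d e : α) (h : τ.SameCycle d e) :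
    τ.SameCycle (ρ d) (ρ e) := by
  have h1 : (ρ * τ * ρ⁻¹).SameCycle (ρ d) (ρ e) := by
    rw [Equiv.Perm.sameCycle_conj]
    simpa using h
  rw [hconj] at h1
  exact Equiv.Perm.sameCycle_inv.mp h1

/-- A dart never lies in the orbit of its reversal: going half way round from `d` to `ρ d` would
give a fixed point of `ρ`, or a dart that `τ` sends to its own reversal. -/
lemma not_sameCycle_reverse {α : Type*} (τ : Equiv.Perm α) (ρ : Equiv.Perm α)
    (hconj : ρ * τ * ρ⁻¹ = τ⁻¹) (hfix : ∀ d, ρ d ≠ d) (hfix' : ∀ d, τ d ≠ ρ d) (d : α) :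
    ¬ τ.SameCycle d (ρ d) := by
  rintro ⟨k, hk⟩
  have hpow : ∀ m : ℤ, ∀ e, ρ ((τ ^ m) e) = (τ ^ (-m)) (ρ e) := by
    intro m e
    have h1 : ρ * τ ^ m * ρ⁻¹ = τ ^ (-m) := by
      rw [← conj_zpow, hconj, inv_zpow, zpow_neg]
    rw [← h1]
    simp
  obtain ⟨m, rfl | rfl⟩ := Int.even_or_odd' k
  · apply hfix ((τ ^ m) d)
    rw [hpow, ← hk, ← Equiv.Perm.mul_apply, ← zpow_add]
    congr 2
    ring
  · apply hfix' ((τ ^ m) d)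
    rw [hpow, ← hk, ← Equiv.Perm.mul_apply, ← zpow_one_add, ← Equiv.Perm.mul_apply, ← zpow_add]
    congr 2
    ring

/-- Every circuit consists of exactly two orbits, one for each direction of traversal. -/
lemma orbitCount_eq_two_mul {α : Type*} [Finite α] (τ : Equiv.Perm α) (ρ : α → α)
    (hρ : ∀ d, ρ (ρ d) = d) (hconj : ∀ d e, τ.SameCycle d e → τ.SameCycle (ρ d) (ρ e))
    (hno : ∀ d, ¬ τ.SameCycle d (ρ d)) :
    orbitCount τ = 2 * Nat.card (Quotient (circuitSetoid τ ρ hρ hconj)) := by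
  classical
  have : Fintype (Quotient (sameCycleSetoid τ)) := Fintype.ofFinite _
  have : Fintype (Quotient (circuitSetoid τ ρ hρ hconj)) := Fintype.ofFinite _
  let π : Quotient (sameCycleSetoid τ) → Quotient (circuitSetoid τ ρ hρ hconj) :=
    Quotient.map' id (fun d e h => Or.inl h)
  have hfib : ∀ c ∈ (Finset.univ : Finset (Quotient (circuitSetoid τ ρ hρ hconj))),
      (Finset.univ.filter fun o => π o = c).card = 2 := by
    intro c _
    induction c using Quotient.inductionOn with
    | h d =>
    rw [Finset.card_eq_two]
    refine ⟨Quotient.mk (sameCycleSetoid τ) d, Quotient.mk (sameCycleSetoid τ) (ρ d), ?_, ?_⟩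
    · intro h
      exact hno d (Quotient.exact h)
    · ext o
      induction o using Quotient.inductionOn with
      | h e =>
      simp only [Finset.mem_filter, Finset.mem_univ, true_and, Finset.mem_insert,
        Finset.mem_singleton, Quotient.eq]
      exact Quotient.eq (r := circuitSetoid τ ρ hρ hconj)
  have := Finset.card_eq_sum_card_fiberwise (f := π) (s := Finset.univ) (t := Finset.univ)
    (fun _ _ => Finset.mem_univ _)
  rw [Finset.sum_congr rfl hfib] at this
  rw [orbitCount, Nat.card_eq_fintype_card, Nat.card_eq_fintype_card]
  simpa [mul_comm] using this

/-! ### Occurrences and interlacement -/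

section word

variable {n : ℕ} (hn : 0 < n) (w : Fin (2 * n) → Fin n)

lemma exists_occurrences (hw : DoubleOccurrence w) (v : Fin n) :
    ∃ a b, a < b ∧ w a = v ∧ w b = v ∧ ∀ r, w r = v → r = a ∨ r = b := by
  obtain ⟨a, b, hab, h⟩ := Finset.card_eq_two.mp (hw v)
  have hmem : ∀ r, w r = v ↔ r = a ∨ r = b := by
    intro r
    have := Finset.ext_iff.mp h r
    simpa using this
  rcases lt_or_gt_of_ne hab with hlt | hlt
  · exact ⟨a, b, hlt, (hmem a).2 (Or.inl rfl), (hmem b).2 (Or.inr rfl), fun r hr => (hmem r).1 hr⟩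
  · exact ⟨b, a, hlt, (hmem b).2 (Or.inr rfl), (hmem a).2 (Or.inl rfl),
      fun r hr => ((hmem r).1 hr).symm⟩

/-- Summing `x` over the letters strictly between the two occurrences of `v` computes the
`v`-entry of `I(w) x` modulo 2. -/
lemma sum_between_eq_mulVec (hw : DoubleOccurrence w) (x : Fin n → ZMod 2) {v : Fin n}
    {a b : Fin (2 * n)} (hab : a < b) (ha : w a = v) (hb : w b = v)
    (huniq : ∀ r, w r = v → r = a ∨ r = b) :
    ∑ r ∈ Finset.univ.filter (fun r => a < r ∧ r < b), x (w r) =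
      (interlaceMatrix w).mulVec x v := by
  classical
  rw [← Finset.sum_fiberwise_of_maps_to (t := Finset.univ) (g := w)
    (fun _ _ => Finset.mem_univ _), Matrix.mulVec, dotProduct]
  refine Finset.sum_congr rfl fun u _ => ?_
  rw [Finset.sum_congr rfl (g := fun _ => x u) (fun r hr => by rw [(Finset.mem_filter.1 hr).2]),
    Finset.sum_const, nsmul_eq_mul, Finset.filter_filter]
  congr 1
  have hfilt : (Finset.univ.filter fun r => (a < r ∧ r < b) ∧ w r = u)
      = Finset.univ.filter fun r => a < r ∧ r < b ∧ w r = u := by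
    simp only [and_assoc]
  rw [hfilt]
  by_cases huv : u = v
  · have h0 : (Finset.univ.filter fun r => a < r ∧ r < b ∧ w r = u) = ∅ := by
      ext r
      simp only [Finset.mem_filter, Finset.mem_univ, true_and, Finset.notMem_empty, iff_false]
      rintro ⟨h1, h2, h3⟩
      rcases huniq r (h3.trans huv) with rfl | rfl
      · exact lt_irrefl _ h1
      · exact lt_irrefl _ h2
    rw [h0]
    simp [interlaceMatrix, Interlaced, huv]
  · have hint : Interlaced w v u ↔
        (Finset.univ.filter fun r => a < r ∧ r < b ∧ w r = u).card = 1 := by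
      constructor
      · intro h
        exact h.2 a b hab ha hb
      · intro h
        refine ⟨fun h => huv h.symm, fun p q hpq hp hq => ?_⟩
        rcases huniq p hp with rfl | rfl <;> rcases huniq q hq with rfl | rfl
        · exact absurd hpq (lt_irrefl _)
        · exact h
        · exact absurd hpq hab.asymm
        · exact absurd hpq (lt_irrefl _)
    have hle : (Finset.univ.filter fun r => a < r ∧ r < b ∧ w r = u).card ≤ 2 := by
      refine le_of_le_of_eq (Finset.card_le_card ?_) (hw u)
      intro r
      simp only [Finset.mem_filter, Finset.mem_univ, true_and]
      exact fun h => h.2.2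
    simp only [interlaceMatrix, Matrix.of_apply, hint]
    generalize (Finset.univ.filter fun r => a < r ∧ r < b ∧ w r = u).card = k at hle
    interval_cases k <;> decide

/-! ### Edge labellings and their jumps -/

/-- The edge labelling `f` changes by `x v` at each passage through the vertex `v`. -/
def HasJumps (x : Fin n → ZMod 2) (f : Fin (2 * n) → ZMod 2) : Prop :=
  ∀ p, f p = f (p - pos1 hn) + x (w p)

lemma val_sub_pos1 (p : Fin (2 * n)) (hp : 0 < p.val) : (p - pos1 hn).val = p.val - 1 := by
  have := p.isLt
  rw [Fin.sub_def]
  simp only [pos1]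
  rw [show 2 * n - 1 + p.val = (p.val - 1) + 2 * n by omega, Nat.add_mod_right,
    Nat.mod_eq_of_lt (by omega)]

lemma val_sub_pos1_zero (p : Fin (2 * n)) (hp : p.val = 0) :
    (p - pos1 hn).val = 2 * n - 1 := by
  rw [Fin.sub_def]
  simp only [pos1, hp]
  exact Nat.mod_eq_of_lt (by omega)

lemma exists_sub_pos1_eq (q : Fin (2 * n)) : ∃ p, p - pos1 hn = q := by
  by_cases h : q.val + 1 < 2 * n
  · refine ⟨⟨q.val + 1, h⟩, Fin.ext ?_⟩
    rw [val_sub_pos1 hn _ (by simp)]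
    simp
  · refine ⟨⟨0, by omega⟩, Fin.ext ?_⟩
    rw [val_sub_pos1_zero hn _ rfl]
    omega

/-- The edge labelling with jumps `x` and value `c` on the edge entering position `0`. -/
def labelling (c : ZMod 2) (x : Fin n → ZMod 2) (p : Fin (2 * n)) : ZMod 2 :=
  c + ∑ r ∈ Finset.univ.filter (fun r => r ≤ p), x (w r)

/-- The total jump around the cycle is zero because every letter occurs twice. -/
lemma sum_word_eq_zero (hw : DoubleOccurrence w) (x : Fin n → ZMod 2) :
    ∑ r, x (w r) = 0 := by
  classical
  rw [← Finset.sum_fiberwise_of_maps_to (t := Finset.univ) (g := w)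
    (fun _ _ => Finset.mem_univ _)]
  refine Finset.sum_eq_zero fun u _ => ?_
  rw [Finset.sum_congr rfl (g := fun _ => x u) (fun r hr => by rw [(Finset.mem_filter.1 hr).2]),
    Finset.sum_const, hw u, nsmul_eq_mul]
  have : ((2 : ℕ) : ZMod 2) = 0 := by decide
  rw [this, zero_mul]

lemma labelling_last (hw : DoubleOccurrence w) (c : ZMod 2) (x : Fin n → ZMod 2)
    (p : Fin (2 * n)) (hp : p.val = 2 * n - 1) : labelling w c x p = c := by
  rw [labelling, Finset.filter_true_of_mem, sum_word_eq_zero w hw, add_zero]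
  intro r _
  rw [Fin.le_def]
  omega

lemma hasJumps_labelling (hw : DoubleOccurrence w) (c : ZMod 2) (x : Fin n → ZMod 2) :
    HasJumps hn w x (labelling w c x) := by
  intro p
  rcases Nat.eq_zero_or_pos p.val with hp | hp
  · rw [labelling_last w hw c x _ (val_sub_pos1_zero hn p hp), labelling]
    have : (Finset.univ.filter fun r => r ≤ p) = {p} := by
      ext r
      simp only [Finset.mem_filter, Finset.mem_univ, true_and, Finset.mem_singleton, Fin.le_def,
        Fin.ext_iff]
      omega
    rw [this, Finset.sum_singleton]
  · have hv := val_sub_pos1 hn p hp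
    have : (Finset.univ.filter fun r => r ≤ p)
        = insert p (Finset.univ.filter fun r => r ≤ p - pos1 hn) := by
      ext r
      simp only [Finset.mem_filter, Finset.mem_univ, true_and, Finset.mem_insert, Fin.le_def,
        Fin.ext_iff]
      omega
    rw [labelling, labelling, this, Finset.sum_insert]
    · ring
    · simp only [Finset.mem_filter, Finset.mem_univ, true_and, Fin.le_def]
      omega

/-- Labellings with given jumps are determined by one value. -/
lemma HasJumps.eq_of_eq_pred_zero {x : Fin n → ZMod 2} {f g : Fin (2 * n) → ZMod 2}
    (hf : HasJumps hn w x f) (hg : HasJumps hn w x g) (z : Fin (2 * n)) (hz : z.val = 0)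
    (h : f (z - pos1 hn) = g (z - pos1 hn)) : f = g := by
  have key : ∀ k (hk : k < 2 * n), f ⟨k, hk⟩ = g ⟨k, hk⟩ := by
    intro k
    induction k with
    | zero =>
      intro hk
      have : z = ⟨0, hk⟩ := Fin.ext hz
      rw [hf, hg, ← this, h]
    | succ k ih =>
      intro hk
      have : (⟨k + 1, hk⟩ : Fin (2 * n)) - pos1 hn = ⟨k, by omega⟩ :=
        Fin.ext (val_sub_pos1 hn _ (by simp))
      rw [hf, hg, this, ih]
  exact funext fun p => key p.val p.isLt

/-- From the first to the second occurrence of `v`, a labelling changes by `(I(w) x) v`, plus the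
jump at the second occurrence itself. -/
lemma HasJumps.apply_second (hw : DoubleOccurrence w) {x : Fin n → ZMod 2}
    {f : Fin (2 * n) → ZMod 2} (hf : HasJumps hn w x f) {v : Fin n}
    {a b : Fin (2 * n)} (hab : a < b) (ha : w a = v) (hb : w b = v)
    (huniq : ∀ r, w r = v → r = a ∨ r = b) :
    f b = f a + (interlaceMatrix w).mulVec x v + x v := by
  have hfl : f = labelling w (f (⟨0, by omega⟩ - pos1 hn)) x :=
    hf.eq_of_eq_pred_zero hn w (hasJumps_labelling hn w hw _ x) ⟨0, by omega⟩ rfl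
      (labelling_last w hw _ x _ (val_sub_pos1_zero hn _ rfl)).symm
  rw [← sum_between_eq_mulVec w hw x hab ha hb huniq, hfl]
  have hsplit : (Finset.univ.filter fun r => r ≤ b)
      = insert b ((Finset.univ.filter fun r => r ≤ a) ∪
          Finset.univ.filter fun r => a < r ∧ r < b) := by
    ext r
    simp only [Finset.mem_filter, Finset.mem_univ, true_and, Finset.mem_insert, Finset.mem_union,
      Fin.le_def, Fin.lt_def, Fin.ext_iff] at hab ⊢
    omega
  simp only [labelling]
  rw [hsplit, Finset.sum_insert, Finset.sum_union, hb]
  · ring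
  · rw [Finset.disjoint_left]
    intro r
    simp only [Finset.mem_filter, Finset.mem_univ, true_and, Fin.le_def, Fin.lt_def]
    omega
  · simp only [Finset.mem_filter, Finset.mem_univ, true_and, Finset.mem_union,
      Fin.le_def, Fin.lt_def] at hab ⊢
    omega

/-! ### Labellings constant on circuits -/

/-- The edge labelling `f` is constant along the circuits of the dart permutation `τ`. -/
def ConstOnCircuits (τ : Equiv.Perm (Fin (2 * n) × Bool)) (f : Fin (2 * n) → ZMod 2) : Prop :=
  ∀ d, f (τ d).1 = f d.1

/-- The linear condition imposed on the jumps `x` by the transition `t` at a vertex `v`; `xv`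
stands for `x v` and `yv` for the `v`-entry of `I(w) x`. -/
def JumpCondition (t : Transition) (xv yv : ZMod 2) : Prop :=
  match t with
  | .follow => xv = 0
  | .cross => yv = 0
  | .reverse => yv + xv = 0

/-- Every dart arrives at the vertex occurring at some position `a`, forwards along the edge
before `a` or backwards along the edge after `a`. -/
lemma dart_cases (d : Fin (2 * n) × Bool) :
    ∃ a, d = (a - pos1 hn, true) ∨ d = (a, false) := by
  obtain ⟨q, _ | _⟩ := d
  · exact ⟨q, Or.inr rfl⟩
  · obtain ⟨a, ha⟩ := exists_sub_pos1_eq hn q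
    exact ⟨a, Or.inl (by rw [ha])⟩

lemma exists_partner (hw : DoubleOccurrence w) (a : Fin (2 * n)) : ∃ b, a ≠ b ∧ w b = w a := by
  obtain ⟨p, q, hpq, hp, hq, h⟩ := exists_occurrences w hw (w a)
  rcases h a rfl with rfl | rfl
  · exact ⟨q, hpq.ne, hq⟩
  · exact ⟨p, hpq.ne.symm, hp⟩

/-- For a labelling constant on circuits, the jumps at the two passages of a vertex agree. -/
lemma ConstOnCircuits.jump_eq {t : Fin n → Transition} {τ : Equiv.Perm (Fin (2 * n) × Bool)}
    (hτ : IsDartPerm hn w t τ) {f : Fin (2 * n) → ZMod 2} (hf : ConstOnCircuits τ f)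
    {a b : Fin (2 * n)} (hab : a ≠ b) (hb : w b = w a) :
    f a - f (a - pos1 hn) = f b - f (b - pos1 hn) := by
  have h1 := hf (a - pos1 hn, true)
  have h2 := hf (b - pos1 hn, true)
  have h3 := hf (a, false)
  obtain ⟨hF, hC, hR⟩ := hτ (w a) a b hab rfl hb
  cases ht : t (w a) with
  | follow =>
    obtain ⟨e1, e2, e3, e4⟩ := hF ht
    rw [e1] at h1
    rw [e2] at h2
    simp only at h1 h2
    rw [h1, h2, sub_self, sub_self]
  | cross =>
    obtain ⟨e1, e2, e3, e4⟩ := hC ht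
    rw [e1] at h1
    rw [e2] at h2
    simp only at h1 h2
    rw [h1, h2, ← neg_sub, ZMod.neg_eq_self_mod_two]
  | reverse =>
    obtain ⟨e1, e2, e3, e4⟩ := hR ht
    rw [e1] at h1
    rw [e3] at h3
    simp only at h1 h3
    rw [h1, h3]

/-- A labelling with jumps `x` is constant on circuits iff `x` solves the linear system. -/
lemma constOnCircuits_iff (hw : DoubleOccurrence w) {t : Fin n → Transition}
    {τ : Equiv.Perm (Fin (2 * n) × Bool)} (hτ : IsDartPerm hn w t τ)
    {x : Fin n → ZMod 2} {f : Fin (2 * n) → ZMod 2} (hf : HasJumps hn w x f) :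
    ConstOnCircuits τ f ↔
      ∀ v, JumpCondition (t v) (x v) ((interlaceMatrix w).mulVec x v) := by
  -- `c`, `c + yv + xv`, `c + xv` and `c + yv + xv + xv` are the values of `f` at `a`, `b`, `a - 1`
  -- and `b - 1`.
  have hcalc : ∀ xv yv c : ZMod 2, (c + yv + xv + xv = c ↔ yv = 0) ∧ (c + yv + xv = c + xv ↔ yv = 0)
    ∧ (c + yv + xv = c ↔ yv + xv = 0) ∧ (c + yv + xv + xv = c + xv ↔ yv + xv = 0) := by decide
  have hsub : ∀ p, f (p - pos1 hn) = f p + x (w p) := by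
    intro p
    have h := hf p
    generalize f p = r at *
    generalize f (p - pos1 hn) = s at *
    generalize x (w p) = u at *
    revert r s u
    decide
  constructor
  · intro hc v
    obtain ⟨a, b, hab, ha, hb, huniq⟩ := exists_occurrences w hw v
    have hsec := hf.apply_second hn w hw hab ha hb huniq
    obtain ⟨hF, hC, hR⟩ := hτ v a b hab.ne ha hb
    have h1 := hc (a - pos1 hn, true)
    have h3 := hc (a, false)
    cases ht : t v with
    | follow =>
      obtain ⟨e1, e2, e3, e4⟩ := hF ht
      rw [e1] at h1
      simp only [hsub, ha] at h1
      simpa [JumpCondition] using h1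
    | cross =>
      obtain ⟨e1, e2, e3, e4⟩ := hC ht
      rw [e1] at h1
      simp only [hsub, ha, hsec] at h1
      exact (hcalc _ _ _).2.1.1 h1
    | reverse =>
      obtain ⟨e1, e2, e3, e4⟩ := hR ht
      rw [e3] at h3
      simp only [hsec] at h3
      exact (hcalc _ _ _).2.2.1.1 h3
  · intro hJ d
    obtain ⟨p, hp⟩ := dart_cases hn d
    obtain ⟨a, b, hab, ha, hb, huniq⟩ := exists_occurrences w hw (w p)
    have hsec := hf.apply_second hn w hw hab ha hb huniq
    obtain ⟨hF, hC, hR⟩ := hτ (w p) a b hab.ne ha hb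
    have hJ := hJ (w p)
    generalize hv : w p = v at *
    generalize (interlaceMatrix w).mulVec x v = yv at *
    have hpab := huniq p hv
    cases ht : t v with
    | follow =>
      obtain ⟨e1, e2, e3, e4⟩ := hF ht
      rw [ht] at hJ
      have hJ : x v = 0 := hJ
      rcases hp with rfl | rfl <;> rcases hpab with rfl | rfl <;>
        simp only [e1, e2, e3, e4, hsub, ha, hb, hJ, add_zero]
    | cross =>
      obtain ⟨e1, e2, e3, e4⟩ := hC ht
      rw [ht] at hJ
      have hJ : yv = 0 := hJ
      have := hcalc (x v) yv (f a)
      rcases hp with rfl | rfl <;> rcases hpab with rfl | rfl <;>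
        simp only [e1, e2, e3, e4, hsub, ha, hb, hsec]
      · exact this.2.1.2 hJ
      · exact (this.1.2 hJ).symm
      · exact this.1.2 hJ
      · exact (this.2.1.2 hJ).symm
    | reverse =>
      obtain ⟨e1, e2, e3, e4⟩ := hR ht
      rw [ht] at hJ
      have hJ : yv + x v = 0 := hJ
      have := hcalc (x v) yv (f a)
      rcases hp with rfl | rfl <;> rcases hpab with rfl | rfl <;>
        simp only [e1, e2, e3, e4, hsub, ha, hb, hsec]
      · exact this.2.2.2.2 hJ
      · exact (this.2.2.2.2 hJ).symm
      · exact this.2.2.1.2 hJ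
      · exact (this.2.2.1.2 hJ).symm

/-- There are twice as many labellings constant on circuits as solutions of the linear system:
a labelling amounts to its jumps and one value. -/
lemma card_constOnCircuits (hw : DoubleOccurrence w) {t : Fin n → Transition}
    {τ : Equiv.Perm (Fin (2 * n) × Bool)} (hτ : IsDartPerm hn w t τ) :
    Nat.card {f // ConstOnCircuits τ f} =
      2 * Nat.card {x : Fin n → ZMod 2 //
        ∀ v, JumpCondition (t v) (x v) ((interlaceMatrix w).mulVec x v)} := by
  have h2 : ∀ m : ℕ, 2 * m = Nat.card (ZMod 2) * m := by simp
  refine Eq.trans ?_ (h2 _).symm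
  rw [← Nat.card_prod]
  symm
  refine Nat.card_congr (Equiv.ofBijective (fun cx => ⟨labelling w cx.1 cx.2.1,
    (constOnCircuits_iff hn w hw hτ (hasJumps_labelling hn w hw cx.1 cx.2.1)).2 cx.2.2⟩) ⟨?_, ?_⟩)
  · rintro ⟨c, x, hx⟩ ⟨c', x', hx'⟩ h
    have h : labelling w c x = labelling w c' x' := congrArg Subtype.val h
    have hc : c = c' := by
      have hl := congrFun h ⟨2 * n - 1, by omega⟩
      rwa [labelling_last w hw _ _ _ rfl, labelling_last w hw _ _ _ rfl] at hl
    have hxx : x = x' := by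
      funext v
      obtain ⟨a, b, hab, ha, -⟩ := exists_occurrences w hw v
      have e := hasJumps_labelling hn w hw c x a
      have e' := hasJumps_labelling hn w hw c' x' a
      rw [h, e', ha] at e
      exact (add_left_cancel e).symm
    subst hc hxx
    rfl
  · rintro ⟨f, hf⟩
    choose a b hab ha hb huniq using exists_occurrences w hw
    let x : Fin n → ZMod 2 := fun v => f (a v) - f (a v - pos1 hn)
    have hJ : HasJumps hn w x f := by
      intro p
      have : x (w p) = f p - f (p - pos1 hn) := by
        by_cases hpa : p = a (w p)
        · simp only [x]
          rw [← hpa]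
        · exact (hf.jump_eq hn w hτ hpa (ha _)).symm
      rw [this]
      ring
    refine ⟨⟨f (⟨0, by omega⟩ - pos1 hn), x, (constOnCircuits_iff hn w hw hτ hJ).1 hf⟩,
      Subtype.ext ?_⟩
    exact ((hasJumps_labelling hn w hw _ x).eq_of_eq_pred_zero hn w hJ ⟨0, by omega⟩ rfl
      (labelling_last w hw _ x _ (val_sub_pos1_zero hn _ rfl)))

/-! ### Orbits of the dart permutation -/

/-- Reversal of darts. -/
def dartRev : Equiv.Perm (Fin (2 * n) × Bool) :=
  Equiv.prodCongr (Equiv.refl _) Equiv.boolNot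

/-- Reversal conjugates `τ` to its inverse, and `τ` sends no dart to its own reversal. -/
lemma dartPerm_reverse (hw : DoubleOccurrence w) {t : Fin n → Transition}
    {τ : Equiv.Perm (Fin (2 * n) × Bool)} (hτ : IsDartPerm hn w t τ)
    (d : Fin (2 * n) × Bool) : τ (dartRev (τ d)) = dartRev d ∧ τ d ≠ dartRev d := by
  have hinj : ∀ a b : Fin (2 * n), a ≠ b → b - pos1 hn ≠ a - pos1 hn := by
    intro a b hab h
    have h := congrArg Fin.val h
    apply hab
    apply Fin.ext
    have := a.isLt
    have := b.isLt
    rcases Nat.eq_zero_or_pos a.val with h1 | h1 <;> rcases Nat.eq_zero_or_pos b.val with h2 | h2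
    · omega
    · rw [val_sub_pos1_zero hn a h1, val_sub_pos1 hn b h2] at h
      omega
    · rw [val_sub_pos1_zero hn b h2, val_sub_pos1 hn a h1] at h
      omega
    · rw [val_sub_pos1 hn b h2, val_sub_pos1 hn a h1] at h
      omega
  obtain ⟨a, hd⟩ := dart_cases hn d
  obtain ⟨b, hab, hb⟩ := exists_partner w hw a
  have hne := hinj a b hab
  obtain ⟨hF, hC, hR⟩ := hτ (w a) a b hab rfl hb
  cases ht : t (w a) with
  | follow =>
    obtain ⟨e1, -, e3, -⟩ := hF ht
    rcases hd with rfl | rfl <;> simp [dartRev, e1, e3]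
  | cross =>
    obtain ⟨e1, e2, e3, e4⟩ := hC ht
    rcases hd with rfl | rfl <;> simp [dartRev, e1, e2, e3, e4]
  | reverse =>
    obtain ⟨e1, e2, e3, e4⟩ := hR ht
    rcases hd with rfl | rfl <;> simp [dartRev, e1, e2, e3, e4, hne, hab.symm]

/-- With `k` circuits there are `2 k` orbits and `2 ^ k` labellings constant on circuits. -/
lemma exists_circuit_count (hw : DoubleOccurrence w) {t : Fin n → Transition}
    {τ : Equiv.Perm (Fin (2 * n) × Bool)} (hτ : IsDartPerm hn w t τ) :
    ∃ k, orbitCount τ = 2 * k ∧ Nat.card {f // ConstOnCircuits τ f} = 2 ^ k := by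
  have hinv : ∀ d : Fin (2 * n) × Bool, dartRev (dartRev d) = d := by
    rintro ⟨p, _ | _⟩ <;> rfl
  have hconj : (dartRev : Equiv.Perm (Fin (2 * n) × Bool)) * τ * dartRev⁻¹ = τ⁻¹ := by
    rw [mul_inv_eq_iff_eq_mul, eq_inv_mul_iff_mul_eq]
    ext1 d
    exact (dartPerm_reverse hn w hw hτ d).1
  have hfix : ∀ d : Fin (2 * n) × Bool, dartRev d ≠ d := by
    rintro ⟨p, _ | _⟩ <;> simp [dartRev]
  have hsc := sameCycle_reverse τ dartRev hconj
  let s := circuitSetoid τ dartRev hinv hsc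
  refine ⟨Nat.card (Quotient s), orbitCount_eq_two_mul τ dartRev hinv hsc
    (not_sameCycle_reverse τ dartRev hconj hfix fun d => (dartPerm_reverse hn w hw hτ d).2), ?_⟩
  have h2 : ∀ m : ℕ, 2 ^ m = Nat.card (ZMod 2) ^ m := by simp
  rw [h2, ← Nat.card_fun]
  symm
  -- A function on circuits is read on the forward darts.
  refine Nat.card_congr (Equiv.ofBijective
    (fun g => ⟨fun p => g (Quotient.mk s (p, true)), ?_⟩) ⟨?_, ?_⟩)
  · have hdir : ∀ d : Fin (2 * n) × Bool, Quotient.mk s (d.1, true) = Quotient.mk s d := by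
      rintro ⟨p, _ | _⟩
      · exact Quotient.sound (Or.inr (Equiv.Perm.SameCycle.refl τ _))
      · rfl
    intro d
    simp only [hdir]
    congr 1
    exact Quotient.sound (Or.inl ((Equiv.Perm.SameCycle.refl τ d).apply_left))
  · intro g g' h
    funext c
    induction c using Quotient.inductionOn with
    | h d =>
    have hdir : Quotient.mk s d = Quotient.mk s (d.1, true) := by
      obtain ⟨p, _ | _⟩ := d
      · exact Quotient.sound (Or.inr (Equiv.Perm.SameCycle.refl τ _))
      · rfl
    rw [hdir]
    exact congrFun (congrArg Subtype.val h) d.1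
  · rintro ⟨f, hf⟩
    have hcyc : ∀ d e, τ.SameCycle d e → f d.1 = f e.1 := by
      rintro d e ⟨m, rfl⟩
      have hz : ∀ m : ℤ, ∀ d, f ((τ ^ m) d).1 = f d.1 := by
        intro m
        induction m with
        | zero => intro d; rfl
        | succ m ih =>
          intro d
          rw [zpow_add_one, Equiv.Perm.mul_apply, ih, hf]
        | pred m ih =>
          intro d
          rw [zpow_sub_one, Equiv.Perm.mul_apply, ih, ← hf]
          simp
      exact (hz m d).symm
    refine ⟨Quotient.lift (fun d => f d.1) ?_, rfl⟩
    rintro d e (h | h)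
    · exact hcyc d e h
    · exact hcyc d (dartRev e) h

end word

/-! ### Nullity -/

lemma card_ker_eq_two_pow_nullity {ι : Type*} [Fintype ι] (M : Matrix ι ι (ZMod 2)) :
    Nat.card {x : ι → ZMod 2 // M.mulVec x = 0} = 2 ^ nullity M := by
  have h1 : Nat.card (LinearMap.ker M.mulVecLin) = 2 ^ Module.finrank (ZMod 2)
      (LinearMap.ker M.mulVecLin) := by
    rw [Module.natCard_eq_pow_finrank (K := ZMod 2)]
    simp
  have h2 := LinearMap.finrank_range_add_finrank_ker M.mulVecLin
  rw [Module.finrank_fintype_fun_eq_card] at h2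
  have h3 : nullity M = Module.finrank (ZMod 2) (LinearMap.ker M.mulVecLin) := by
    rw [nullity, Matrix.rank]
    omega
  rw [h3, ← h1]
  rfl

/-- Extension by zero identifies the kernel of `A_S` with the solutions of the linear system
attached to `t_S`. -/
lemma card_jumpSolutions {n : ℕ} (w : Fin (2 * n) → Fin n) (ℓ : Fin n → ZMod 2)
    (S : Finset (Fin n)) :
    Nat.card {x : Fin n → ZMod 2 //
        ∀ v, JumpCondition (if v ∈ S then
              (if ℓ v = 1 then Transition.reverse else Transition.cross)
            else Transition.follow) (x v) ((interlaceMatrix w).mulVec x v)} =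
      2 ^ nullity ((interlaceMatrix w + Matrix.diagonal ℓ).submatrix
            (fun i : {x // x ∈ S} => (i : Fin n)) (fun j : {x // x ∈ S} => (j : Fin n))) := by
  rw [← card_ker_eq_two_pow_nullity]
  have hcond : ∀ x : Fin n → ZMod 2, (∀ v, JumpCondition (if v ∈ S then
              (if ℓ v = 1 then Transition.reverse else Transition.cross)
            else Transition.follow) (x v) ((interlaceMatrix w).mulVec x v)) ↔
      (∀ v, v ∉ S → x v = 0) ∧
        ∀ v, v ∈ S → (interlaceMatrix w + Matrix.diagonal ℓ).mulVec x v = 0 := by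
    intro x
    rw [← forall_and]
    refine forall_congr' fun v => ?_
    rw [Matrix.add_mulVec, Pi.add_apply, Matrix.mulVec_diagonal]
    by_cases hv : v ∈ S
    · by_cases hl : ℓ v = 1
      · simp [hv, hl, JumpCondition]
      · have hl0 : ℓ v = 0 := by
          generalize ℓ v = r at *
          revert r
          decide
        simp [hv, hl0, JumpCondition]
    · simp [hv, JumpCondition]
  have hsub : ∀ x : Fin n → ZMod 2, (∀ v, v ∉ S → x v = 0) → ∀ v : {x // x ∈ S},
      ((interlaceMatrix w + Matrix.diagonal ℓ).submatrix
            (fun i : {x // x ∈ S} => (i : Fin n)) (fun j : {x // x ∈ S} => (j : Fin n))).mulVec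
          (fun u => x u.1) v = (interlaceMatrix w + Matrix.diagonal ℓ).mulVec x v.1 := by
    intro x hx v
    simp only [Matrix.mulVec, dotProduct, Matrix.submatrix_apply]
    rw [← Finset.sum_subset (Finset.subset_univ S) (fun u _ hu => by rw [hx u hu, mul_zero])]
    exact Finset.sum_coe_sort S (fun u => (interlaceMatrix w + Matrix.diagonal ℓ) v.1 u * x u)
  refine Nat.card_congr (Equiv.ofBijective (fun x => ⟨fun u => x.1 u.1, ?_⟩) ⟨?_, ?_⟩)
  · obtain ⟨h0, h1⟩ := (hcond _).1 x.2
    funext v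
    rw [hsub _ h0]
    exact h1 _ v.2
  · rintro ⟨x, hx⟩ ⟨x', hx'⟩ h
    have h : (fun u : {x // x ∈ S} => x u.1) = fun u => x' u.1 := congrArg Subtype.val h
    refine Subtype.ext (funext fun v => ?_)
    by_cases hv : v ∈ S
    · exact congrFun h ⟨v, hv⟩
    · exact (((hcond _).1 hx).1 v hv).trans (((hcond _).1 hx').1 v hv).symm
  · rintro ⟨z, hz⟩
    let x : Fin n → ZMod 2 := fun v => if h : v ∈ S then z ⟨v, h⟩ else 0
    have hxz : (fun u : {x // x ∈ S} => x u.1) = z := by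
      funext u
      simp [x]
    have h0 : ∀ v, v ∉ S → x v = 0 := fun v hv => by simp [x, hv]
    refine ⟨⟨x, (hcond x).2 ⟨h0, fun v hv => ?_⟩⟩, Subtype.ext hxz⟩
    rw [← hsub x h0 ⟨v, hv⟩, hxz, hz]
    rfl

/-- **Vertex-nullity interlace polynomial as a circuit-partition generating function.**
Let `w` be a double occurrence word on `n ≥ 1` vertices, `ℓ` a loop assignment and
`A = I(w) + diag(ℓ)`. For `S ⊆ {1,…,n}` let `t_S` be the transition assignment which
follows outside `S`, reverses at looped vertices of `S` and crosses at unlooped vertices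
of `S`, and let `τ t_S` be the corresponding dart permutation, so that the circuit
partition `P_{t_S}` has `|P_{t_S}| = (number of orbits of τ t_S)/2`. Then
`Σ_S (y−1)^(ν(A_S)) = Σ_S (y−1)^(|P_{t_S}|−1)` in `ℤ[y]`; the left-hand side is the
vertex-nullity interlace polynomial `q_N(H)` of the looped graph `H` with adjacency
matrix `A`. -/
theorem interlace_polynomial_circuit_partitions {n : ℕ} (hn : 0 < n)
    (w : Fin (2 * n) → Fin n) (hw : DoubleOccurrence w) (ℓ : Fin n → ZMod 2)
    (τ : (Fin n → Transition) → Equiv.Perm (Fin (2 * n) × Bool))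
    (hτ : ∀ t : Fin n → Transition, IsDartPerm hn w t (τ t)) :
    ∑ S : Finset (Fin n),
        (Polynomial.X - 1 : Polynomial ℤ) ^
          nullity ((interlaceMatrix w + Matrix.diagonal ℓ).submatrix
            (fun i : {x // x ∈ S} => (i : Fin n)) (fun j : {x // x ∈ S} => (j : Fin n))) =
      ∑ S : Finset (Fin n),
        (Polynomial.X - 1 : Polynomial ℤ) ^
          (orbitCount (τ (fun v => if v ∈ S then
              (if ℓ v = 1 then Transition.reverse else Transition.cross)
            else Transition.follow)) / 2 - 1) := by
  refine Finset.sum_congr rfl fun S _ => ?_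
  congr 1
  obtain ⟨k, hk, hcard⟩ := exists_circuit_count hn w hw (hτ (fun v => if v ∈ S then
              (if ℓ v = 1 then Transition.reverse else Transition.cross)
            else Transition.follow))
  rw [card_constOnCircuits hn w hw (hτ _), card_jumpSolutions w ℓ S, ← pow_succ'] at hcard
  have := Nat.pow_right_injective le_rfl hcard
  rw [hk]
  omega
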